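/- arXiv:2003.03355 — 2 statements merged into one kernel-verified Lean document; each statement's English description precedes it below -/
import Mathlib

section
/- Let n ≥ 2 and let G_0, G_1, …, G_T be an actively dynamic sequence with G_0 = P_n the path graph on n vertices. If the endpoints 0 and n−1 are reachable in G_T with dist_{G_T}(0, n−1) ≤ ⌈log₂ n⌉, then 2^T · ⌈log₂ n⌉ ≥ n − 1; hence any transformation strategy that brings the endpoints of a spanning line within distance ⌈log₂ n⌉ requires T = Ω(log n) rounds. -/
/-- A sequence of simple graphs on a common vertex set is actively dynamic (up to time `T`)
if, for every round `i < T`, every edge of `G (i+1)` that is not an edge of `G i` joins two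
vertices that have a common neighbor in `G i`. -/
def ActivelyDynamic {V : Type*} (Gs : ℕ → SimpleGraph V) (T : ℕ) : Prop :=
  ∀ i < T, ∀ u v : V, (Gs (i + 1)).Adj u v → ¬ (Gs i).Adj u v →
    ∃ w : V, (Gs i).Adj u w ∧ (Gs i).Adj w v

/-- The path graph `P_n` on vertices `{0, …, n-1}` with edges `{j, j+1}`. -/
def pathGraph' (n : ℕ) : SimpleGraph (Fin n) :=
  SimpleGraph.fromRel (fun u v => u.val + 1 = v.val)

/-! One round divides distances by at most `2`: each edge of `G (i+1)` can be replaced by a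
walk of length at most `2` in `G i`. Hence `T` rounds divide the distance `n - 1` between the
endpoints of the path by at most `2 ^ T`. -/

section

variable {V : Type*} {G : SimpleGraph V}

theorem le_mul_edist_of_forall_adj_le {d : V → V → ℕ∞} {c : ℕ∞} (hc : c ≠ 0)
    (d_self : ∀ u, d u u = 0) (d_triangle : ∀ u v w, d u w ≤ d u v + d v w)
    (d_adj : ∀ u v, G.Adj u v → d u v ≤ c) (u v : V) : d u v ≤ c * G.edist u v := by
  have le_mul_length {u v : V} (p : G.Walk u v) : d u v ≤ c * p.length := by
    induction p with
    | nil => simp [d_self]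
    | @cons u v w h p ih =>
      calc d u w ≤ d u v + d v w := d_triangle u v w
        _ ≤ c + c * p.length := add_le_add (d_adj u v h) ih
        _ = c * (p.cons h).length := by
          rw [SimpleGraph.Walk.length_cons, Nat.cast_succ, mul_add_one, add_comm]
  by_cases huv : G.Reachable u v
  · obtain ⟨p, hp⟩ := huv.exists_walk_length_eq_edist
    exact hp ▸ le_mul_length p
  · simp [SimpleGraph.edist_eq_top_of_not_reachable huv, ENat.mul_top hc]

theorem edist_le_two_of_adj_of_adj {u v w : V} (huw : G.Adj u w) (hwv : G.Adj w v) :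
    G.edist u v ≤ 2 :=
  (huw.toWalk.append hwv.toWalk).edist_le

end

namespace ActivelyDynamic

variable {V : Type*} {Gs : ℕ → SimpleGraph V} {T : ℕ}

theorem edist_le_two_mul_edist_succ (hdyn : ActivelyDynamic Gs T) {i : ℕ} (hi : i < T) (u v : V) :
    (Gs i).edist u v ≤ 2 * (Gs (i + 1)).edist u v := by
  refine le_mul_edist_of_forall_adj_le two_ne_zero (fun _ ↦ SimpleGraph.edist_self)
    (fun _ _ _ ↦ SimpleGraph.edist_triangle) (fun a b hab ↦ ?_) u v
  by_cases hold : (Gs i).Adj a b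
  · exact (SimpleGraph.edist_eq_one_iff_adj.mpr hold).trans_le one_le_two
  · obtain ⟨w, haw, hwb⟩ := hdyn i hi a b hab hold
    exact edist_le_two_of_adj_of_adj haw hwb

theorem edist_zero_le_two_pow_mul_edist (hdyn : ActivelyDynamic Gs T) (u v : V) :
    (Gs 0).edist u v ≤ 2 ^ T * (Gs T).edist u v := by
  induction T with
  | zero => simp
  | succ T ih =>
    have hdyn_T : ActivelyDynamic Gs T := fun i hi ↦ hdyn i (hi.trans T.lt_succ_self)
    calc (Gs 0).edist u v ≤ 2 ^ T * (Gs T).edist u v := ih hdyn_T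
      _ ≤ 2 ^ T * (2 * (Gs (T + 1)).edist u v) := by
        gcongr
        exact hdyn.edist_le_two_mul_edist_succ T.lt_succ_self u v
      _ = 2 ^ (T + 1) * (Gs (T + 1)).edist u v := by rw [pow_succ, mul_assoc]

end ActivelyDynamic

theorem val_sub_val_le_edist_pathGraph' {n : ℕ} (u v : Fin n) :
    ((v.val - u.val : ℕ) : ℕ∞) ≤ (pathGraph' n).edist u v := by
  rw [← one_mul ((pathGraph' n).edist u v)]
  refine le_mul_edist_of_forall_adj_le (d := fun a b ↦ ((b.val - a.val : ℕ) : ℕ∞)) one_ne_zero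
    (fun a ↦ by simp) (fun a b c ↦ ?_) (fun a b hab ↦ ?_) u v
  · norm_cast
    omega
  · rw [pathGraph', SimpleGraph.fromRel_adj] at hab
    norm_cast
    omega

theorem path_time_lower_bound_general {n : ℕ} {Gs : ℕ → SimpleGraph (Fin n)} {T : ℕ}
    (hdyn : ActivelyDynamic Gs T) (h0 : Gs 0 = pathGraph' n) (u v : Fin n) :
    ((v.val - u.val : ℕ) : ℕ∞) ≤ 2 ^ T * (Gs T).edist u v :=
  calc ((v.val - u.val : ℕ) : ℕ∞) ≤ (pathGraph' n).edist u v := val_sub_val_le_edist_pathGraph' u v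
    _ = (Gs 0).edist u v := by rw [h0]
    _ ≤ 2 ^ T * (Gs T).edist u v := hdyn.edist_zero_le_two_pow_mul_edist u v

/-- Lower bound on time: if an actively dynamic sequence starting from the path `P_n`
brings the endpoints `0` and `n-1` within distance `⌈log₂ n⌉`, then `2^T·⌈log₂ n⌉ ≥ n-1`,
i.e. `T = Ω(log n)`. -/
theorem path_time_lower_bound (n : ℕ) (hn : 2 ≤ n) (Gs : ℕ → SimpleGraph (Fin n)) (T : ℕ)
    (hdyn : ActivelyDynamic Gs T) (h0 : Gs 0 = pathGraph' n)
    (hreach : (Gs T).Reachable ⟨0, by omega⟩ ⟨n - 1, by omega⟩)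
    (hdist : (Gs T).dist ⟨0, by omega⟩ ⟨n - 1, by omega⟩ ≤ Nat.clog 2 n) :
    n - 1 ≤ 2 ^ T * Nat.clog 2 n := by
  have endpoints_bound : n - 1 ≤ 2 ^ T * (Gs T).dist ⟨0, by omega⟩ ⟨n - 1, by omega⟩ := by
    exact_mod_cast hreach.coe_dist_eq_edist ▸ path_time_lower_bound_general hdyn h0 _ _
  exact endpoints_bound.trans (Nat.mul_le_mul_left _ hdist)
end

section
/- Let n ≥ 2 and let G_0, G_1, …, G_T be an actively dynamic sequence with G_0 = P_n the path graph on n vertices. If the endpoints 0 and n−1 are reachable in G_T with dist_{G_T}(0, n−1) ≤ ⌈log₂ n⌉, then the total number of edge activations satisfies Σ_{i<T} |E(G_{i+1}) \ E(G_i)| ≥ n − 1 − ⌈log₂ n⌉; hence Ω(n) total edge activations are required. -/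
/-!
Read backwards in time, a round costs little: undoing a round replaces each activated edge on a
shortest path by two edges of the previous graph. A shortest path repeats no edge, so each round
lengthens it by at most the number of edges activated in that round. Hence the initial distance is
at most the final distance plus the total number of activations, while the endpoints of `P_n` start
at distance `n - 1`.
-/

section EdgeReplacement

variable {V : Type*} {G H : SimpleGraph V} {k : ℕ∞}

theorem edist_le_length_add_mul_encard_edgeSet_sdiff_of_isTrail
    (hnew : ∀ a b, H.Adj a b → ¬ G.Adj a b → G.edist a b ≤ k + 1)
    {u v : V} {p : H.Walk u v} (hp : p.IsTrail) :
    G.edist u v ≤ p.length + k * (p.edgeSet \ G.edgeSet).encard := by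
  induction p with
  | nil => simp
  | @cons a b c hab p ih =>
    obtain ⟨hp, hfresh⟩ := (SimpleGraph.Walk.isTrail_cons hab p).mp hp
    have htriangle : G.edist a c ≤
        G.edist a b + (p.length + k * (p.edgeSet \ G.edgeSet).encard) :=
      SimpleGraph.edist_triangle.trans (by gcongr; exact ih hp)
    rw [SimpleGraph.Walk.edgeSet_cons, SimpleGraph.Walk.length_cons]
    refine htriangle.trans ?_
    by_cases hold : G.Adj a b
    · rw [Set.insert_sdiff_of_mem _ (G.mem_edgeSet.mpr hold),
        SimpleGraph.edist_eq_one_iff_adj.mpr hold]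
      exact le_of_eq (by push_cast; ring)
    · rw [Set.insert_sdiff_of_notMem _ (G.mem_edgeSet.not.mpr hold),
        Set.encard_insert_of_notMem fun hmem ↦ hfresh hmem.1]
      calc G.edist a b + (p.length + k * (p.edgeSet \ G.edgeSet).encard)
          ≤ (k + 1) + (p.length + k * (p.edgeSet \ G.edgeSet).encard) := by
            gcongr; exact hnew a b hab hold
        _ = (p.length + 1 : ℕ) + k * ((p.edgeSet \ G.edgeSet).encard + 1) := by
            push_cast; ring

theorem edist_le_edist_add_mul_encard_edgeSet_sdiff
    (hnew : ∀ a b, H.Adj a b → ¬ G.Adj a b → G.edist a b ≤ k + 1) (u v : V) :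
    G.edist u v ≤ H.edist u v + k * (H.edgeSet \ G.edgeSet).encard := by
  classical
  by_cases hreach : H.Reachable u v
  · obtain ⟨p, hp⟩ := hreach.exists_walk_length_eq_edist
    calc G.edist u v
        ≤ p.bypass.length + k * (p.bypass.edgeSet \ G.edgeSet).encard :=
          edist_le_length_add_mul_encard_edgeSet_sdiff_of_isTrail hnew p.bypass_isPath.isTrail
      _ ≤ p.length + k * (H.edgeSet \ G.edgeSet).encard := by
          gcongr
          · exact p.length_bypass_le_length
          · exact fun e he ↦ p.bypass.edges_subset_edgeSet he
      _ = H.edist u v + k * (H.edgeSet \ G.edgeSet).encard := by rw [hp]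
  · simp [SimpleGraph.edist_eq_top_of_not_reachable hreach]

end EdgeReplacement

namespace ActivelyDynamic

variable {V : Type*} {Gs : ℕ → SimpleGraph V} {T i : ℕ}

theorem edist_le_two_of_new_edge (hdyn : ActivelyDynamic Gs T) (hi : i < T) {a b : V}
    (hadj : (Gs (i + 1)).Adj a b) (hnew : ¬ (Gs i).Adj a b) : (Gs i).edist a b ≤ 2 := by
  obtain ⟨w, haw, hwb⟩ := hdyn i hi a b hadj hnew
  exact SimpleGraph.edist_le (.cons haw (.cons hwb .nil))

theorem edist_le_edist_succ_add_encard (hdyn : ActivelyDynamic Gs T) (hi : i < T) (u v : V) :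
    (Gs i).edist u v ≤
      (Gs (i + 1)).edist u v + ((Gs (i + 1)).edgeSet \ (Gs i).edgeSet).encard := by
  simpa only [one_mul] using edist_le_edist_add_mul_encard_edgeSet_sdiff (k := 1)
    (fun a b hadj hnew ↦ (hdyn.edist_le_two_of_new_edge hi hadj hnew).trans_eq
      one_add_one_eq_two.symm) u v

end ActivelyDynamic

theorem le_add_edist_of_forall_adj {V : Type*} {G : SimpleGraph V} {f : V → ℕ∞}
    (hf : ∀ a b, G.Adj a b → f b ≤ f a + 1) (u v : V) : f v ≤ f u + G.edist u v := by
  have along_walk {u v : V} (p : G.Walk u v) : f v ≤ f u + p.length := by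
    induction p with
    | nil => simp
    | @cons a b c hab p ih =>
      calc f c ≤ f b + p.length := ih
        _ ≤ f a + 1 + p.length := by gcongr; exact hf a b hab
        _ = f a + (p.length + 1 : ℕ) := by push_cast; ring
  by_cases hreach : G.Reachable u v
  · obtain ⟨p, hp⟩ := hreach.exists_walk_length_eq_edist
    exact hp ▸ along_walk p
  · simp [SimpleGraph.edist_eq_top_of_not_reachable hreach]

theorem val_le_val_add_edist_pathGraph' {n : ℕ} (u v : Fin n) :
    (v.val : ℕ∞) ≤ u.val + (pathGraph' n).edist u v := by
  refine le_add_edist_of_forall_adj (f := fun a : Fin n ↦ (a.val : ℕ∞)) (fun a b hab ↦ ?_) u v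
  have hval : b.val ≤ a.val + 1 := by
    rw [pathGraph', SimpleGraph.fromRel_adj] at hab
    omega
  exact_mod_cast hval

theorem path_total_activations_lower_bound_general {V : Type*} {Gs : ℕ → SimpleGraph V} {T : ℕ}
    (hdyn : ActivelyDynamic Gs T) (u v : V) :
    (Gs 0).edist u v ≤ (Gs T).edist u v +
      ∑ i ∈ Finset.range T, ((Gs (i + 1)).edgeSet \ (Gs i).edgeSet).encard := by
  induction T with
  | zero => simp
  | succ T ih =>
    rw [Finset.sum_range_succ_comm, ← add_assoc]
    refine (ih fun i hi ↦ hdyn i (hi.trans T.lt_succ_self)).trans ?_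
    gcongr
    exact hdyn.edist_le_edist_succ_add_encard T.lt_succ_self u v

/-- Lower bound on total edge activations: if an actively dynamic sequence starting from
the path `P_n` brings the endpoints `0` and `n-1` within distance `⌈log₂ n⌉`, then the
total number of edge activations is at least `n - 1 - ⌈log₂ n⌉`. -/
theorem path_total_activations_lower_bound (n : ℕ) (hn : 2 ≤ n)
    (Gs : ℕ → SimpleGraph (Fin n)) (T : ℕ)
    (hdyn : ActivelyDynamic Gs T) (h0 : Gs 0 = pathGraph' n)
    (hreach : (Gs T).Reachable ⟨0, by omega⟩ ⟨n - 1, by omega⟩)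
    (hdist : (Gs T).dist ⟨0, by omega⟩ ⟨n - 1, by omega⟩ ≤ Nat.clog 2 n) :
    (n : ℤ) - 1 - (Nat.clog 2 n : ℤ)
      ≤ ∑ i ∈ Finset.range T, (((Gs (i + 1)).edgeSet \ (Gs i).edgeSet).ncard : ℤ) := by
  have hpath : ((n - 1 : ℕ) : ℕ∞) ≤ (pathGraph' n).edist ⟨0, by omega⟩ ⟨n - 1, by omega⟩ := by
    simpa using val_le_val_add_edist_pathGraph' (⟨0, by omega⟩ : Fin n) ⟨n - 1, by omega⟩
  have hbound := hpath.trans (h0 ▸ path_total_activations_lower_bound_general hdyn _ _)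
  simp only [← hreach.coe_dist_eq_edist, ← (Set.toFinite _).cast_ncard_eq] at hbound
  norm_cast at hbound
  rw [← Nat.cast_sum]
  omega
end
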